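/- Let M be a normal subgroup of a finite group H such that the index [H : M] is odd, and let χ be a real-valued irreducible complex character of M. Then χ has a unique real-valued extension to its inertia group H_χ (the stabilizer of χ in H). -/

import Mathlib

open CategoryTheory

/-- The inertia group of a class function `χ` (given as a function on the ambient
group `H`, vanishing outside the normal subgroup on which it is a character):
the stabilizer of `χ` under the conjugation action of `H`. -/
def inertiaGroup {H : Type} [Group H] (χ : H → ℂ) : Subgroup H where
  carrier := {g | ∀ x, χ (g⁻¹ * x * g) = χ x}
  one_mem' := by intro x; simp
  mul_mem' := by
    intro a b ha hb x
    have e : (a * b)⁻¹ * x * (a * b) = b⁻¹ * (a⁻¹ * x * a) * b := by group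
    rw [e, hb (a⁻¹ * x * a), ha x]
  inv_mem' := by
    intro a ha x
    have h := ha (a * x * a⁻¹)
    have e : a⁻¹ * (a * x * a⁻¹) * a = x := by group
    rw [e] at h
    have e2 : a⁻¹⁻¹ * x * a⁻¹ = a * x * a⁻¹ := by group
    rw [e2, h]

/-- `χ` (a function on the ambient group `G`) restricts to an irreducible complex
character of the subgroup `K`. -/
def IsIrredCharOn {G : Type} [Group G] (K : Subgroup G) (χ : G → ℂ) : Prop :=
  ∃ V : FDRep ℂ K, Simple V ∧ ∀ k : K, χ k = V.character k

/-!
An irreducible character `χ` of `N` is real-valued exactly when a representation `ρ` affording it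
preserves a nondegenerate bilinear form `B`. If `χ` is invariant under `G`, then over each `g : G`
there is an isometry `P` of `B` carrying `ρ` to its conjugate by `g`: Schur's lemma makes any
intertwiner a similitude, and a square root of the similitude factor rescales it. By Schur again
`P` is unique up to sign, so the pairs `(g, P)` form an extension of `G` by a group of order
dividing `2` which already splits over `N`. As `N` has odd index, the Schur-Zassenhaus theorem
extends that splitting to `G`, which yields an extension of `ρ` preserving `B`.

For uniqueness, the values at `g` of two extensions of `χ` differ by a factor `c` with
`c ^ [G : N] = 1`; odd powers are injective on real numbers.
-/

open Representation (IntertwiningMap IsIrreducible IsIntertwiningMap isIntertwiningMap_iff)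

section GroupSections

variable {E G : Type*} [Group E] [Group G]

-- In `E / s(N)` the image of `ker π` has index `[G : N]`, and the preimage of a Schur-Zassenhaus
-- complement of it meets every fibre of `π` exactly once.
theorem exists_section_extending_of_coprime {π : E →* G} (hπ : Function.Surjective π)
    {N : Subgroup G} {s : N →* E} [s.range.Normal] (hs : ∀ n, π (s n) = n)
    (hcop : (Nat.card π.ker).Coprime N.index) :
    ∃ σ : G →* E, (∀ g, π (σ g) = g) ∧ ∀ n : N, σ n = s n := by
  let q := QuotientGroup.mk' s.range
  have hq : Function.Surjective q := QuotientGroup.mk'_surjective _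
  have hnormal : (π.ker.map q).Normal := Subgroup.Normal.map inferInstance q hq
  have hindex : (π.ker.map q).index = N.index := by
    have hrange : s.range.map π = N := by
      rw [MonoidHom.map_range, show π.comp s = N.subtype from MonoidHom.ext hs, N.range_subtype]
    rw [Subgroup.index_map, MonoidHom.range_eq_top.2 hq, Subgroup.index_top, mul_one,
      QuotientGroup.ker_mk', sup_comm, ← Subgroup.comap_map_eq, hrange,
      Subgroup.index_comap_of_surjective N hπ]
  obtain ⟨C, hC⟩ := Subgroup.exists_right_complement'_of_coprime (N := π.ker.map q) <| by
    rw [hindex]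
    exact hcop.coprime_dvd_left (Subgroup.card_map_dvd _ _)
  let p := π.comp (C.comap q).subtype
  have hp : Function.Bijective p := by
    refine ⟨(injective_iff_map_eq_one p).2 fun ⟨x, hx⟩ hpx => ?_, fun g => ?_⟩
    · have hqx : q x = 1 := Subgroup.disjoint_def.1 hC.disjoint ⟨x, hpx, rfl⟩ hx
      obtain ⟨n, rfl⟩ := (QuotientGroup.eq_one_iff x).1 hqx
      have hn : n = 1 := Subtype.ext ((hs n).symm.trans hpx)
      exact Subtype.ext (by simp [hn])
    · obtain ⟨e, rfl⟩ := hπ g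
      obtain ⟨⟨⟨_, z, hz, rfl⟩, c⟩, hzc⟩ := hC.2 (q e)
      have hmem : z⁻¹ * e ∈ C.comap q := by
        have : q (z⁻¹ * e) = c := by rw [map_mul, map_inv, ← hzc, inv_mul_cancel_left]
        rw [Subgroup.mem_comap, this]
        exact c.2
      exact ⟨⟨_, hmem⟩, by simp [p, MonoidHom.mem_ker.1 hz]⟩
  let lift := MulEquiv.ofBijective p hp
  refine ⟨(C.comap q).subtype.comp lift.symm.toMonoidHom, lift.apply_symm_apply, fun n => ?_⟩
  have hmem : s n ∈ C.comap q := by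
    have : q (s n) = 1 := (QuotientGroup.eq_one_iff (s n)).2 ⟨n, rfl⟩
    rw [Subgroup.mem_comap, this]
    exact C.one_mem
  have : lift.symm n = ⟨s n, hmem⟩ := lift.symm_apply_eq.2 (hs n).symm
  exact congrArg Subtype.val this

end GroupSections

section Restriction

variable {k V G G' : Type*} [Field k] [AddCommGroup V] [Module k V] [Monoid G] [Monoid G']

/-- The pullback of a representation along a homomorphism. With the inclusion of a subgroup it is
the restriction, with a conjugation automorphism of a normal subgroup the conjugate
representation. -/
abbrev resRep (ρ : Representation k G V) (f : G' →* G) : Representation k G' V :=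
  ρ.comp f

theorem nontrivial_of_isIrreducible (ρ : Representation k G V) [ρ.IsIrreducible] :
    Nontrivial V := by
  by_contra hV
  rw [not_nontrivial_iff_subsingleton] at hV
  exact bot_ne_top (α := Subrepresentation ρ)
    (Subrepresentation.toSubmodule_injective (Subsingleton.elim _ _))

theorem isIrreducible_of_resRep {ρ : Representation k G V} (f : G' →* G)
    [(resRep ρ f).IsIrreducible] : ρ.IsIrreducible where
  exists_pair_ne := by
    have := nontrivial_of_isIrreducible (resRep ρ f)
    exact ⟨⊥, ⊤, fun hbot => bot_ne_top (congrArg Subrepresentation.toSubmodule hbot)⟩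
  eq_bot_or_eq_top S := by
    let S' : Subrepresentation (resRep ρ f) :=
      ⟨S.toSubmodule, fun g => S.apply_mem_toSubmodule (f g)⟩
    exact (eq_bot_or_eq_top S').imp
      (fun hS => Subrepresentation.toSubmodule_injective (congrArg (·.toSubmodule) hS))
      (fun hS => Subrepresentation.toSubmodule_injective (congrArg (·.toSubmodule) hS))

end Restriction

section Schur

variable {k V W G : Type*} [Field k] [AddCommGroup V] [Module k V] [AddCommGroup W] [Module k W]

theorem exists_eq_smul_of_equiv [Monoid G] [IsAlgClosed k] [FiniteDimensional k V]
    {ρ : Representation k G V} {σ : Representation k G W} [ρ.IsIrreducible]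
    (φ : ρ.Equiv σ) (f : ρ.IntertwiningMap σ) : ∃ c : k, ∀ v, f v = c • φ v := by
  obtain ⟨c, hc⟩ :=
    (IsIrreducible.algebraMap_intertwiningMap_bijective_of_isAlgClosed (ρ := ρ)).2
      (φ.symm.toIntertwiningMap.comp f)
  refine ⟨c, fun v => φ.symm.injective ?_⟩
  simpa using (DFunLike.congr_fun hc v).symm

theorem isIntertwiningMap_dual_iff [Group G] {ρ : Representation k G V}
    {B : V →ₗ[k] Module.Dual k V} :
    IsIntertwiningMap ρ ρ.dual B ↔ ∀ g v w, B (ρ g v) (ρ g w) = B v w := by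
  refine (isIntertwiningMap_iff ..).trans <|
    forall_congr' fun g => forall_congr' fun v => ⟨fun h w => ?_, fun h => ?_⟩
  · simp [h, Representation.dual_apply, Module.Dual.transpose_apply]
  · ext w
    simpa [Representation.dual_apply, Module.Dual.transpose_apply] using h (ρ g⁻¹ w)

theorem dualEquiv_apply_apply [Group G] {ρ : Representation k G V} (B : ρ.Equiv ρ.dual) (g : G)
    (v w : V) : B (ρ g v) (ρ g w) = B v w :=
  isIntertwiningMap_dual_iff (B := B.toLinearMap).1 ⟨B.isIntertwining _ _⟩ g v w

theorem exists_dualEquiv_apply_ne_zero [Group G] {ρ : Representation k G V} [ρ.IsIrreducible]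
    (B : ρ.Equiv ρ.dual) : ∃ v w, B v w ≠ 0 := by
  have := nontrivial_of_isIrreducible ρ
  obtain ⟨v, hv⟩ := exists_ne (0 : V)
  exact ⟨v, DFunLike.ne_iff.1 ((map_ne_zero_iff B B.injective).2 hv)⟩

end Schur

section ConjIsometries

variable {k V G : Type*} [Field k] [AddCommGroup V] [Module k V] [Group G] {N : Subgroup G}
  [N.Normal]

/-- The representation `n ↦ ρ (g * n * g⁻¹)` of a normal subgroup. -/
abbrev conjRep (ρ : Representation k N V) (g : G) : Representation k N V :=
  resRep ρ (MulAut.conjNormal g).toMonoidHom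

/-- The group of pairs `(g, P)` for which `P` is an isometry of the invariant form `B` and carries
`ρ` to its conjugate by `g`. Lifting `G` into this group amounts to extending `ρ` to a
representation of `G` that preserves `B`. -/
def conjIsometries (ρ : Representation k N V) (B : ρ.Equiv ρ.dual) :
    Subgroup (G × (Module.End k V)ˣ) where
  carrier := {p | (∀ n, p.2 * ρ n = conjRep ρ p.1 n * p.2) ∧
    ∀ v w, B (p.2.val v) (p.2.val w) = B v w}
  one_mem' := by simp
  mul_mem' := by
    rintro ⟨g, P⟩ ⟨h, Q⟩ ⟨hP, hBP⟩ ⟨hQ, hBQ⟩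
    refine ⟨fun n => ?_, fun v w => by simp [hBP, hBQ]⟩
    calc P.val * Q.val * ρ n = P.val * ρ (MulAut.conjNormal h n) * Q.val := by
          rw [mul_assoc, mul_assoc]; exact congrArg (P.val * ·) (hQ n)
      _ = conjRep ρ (g * h) n * (P.val * Q.val) := by
          rw [← mul_assoc]; refine (congrArg (· * Q.val) (hP _)).trans ?_; simp
  inv_mem' := by
    rintro ⟨g, P⟩ ⟨hP, hBP⟩
    refine ⟨fun n => ?_, fun v w => ?_⟩
    · simp only at hP
      simp [Units.inv_mul_eq_iff_eq_mul, ← mul_assoc, hP]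
    · simpa [← Module.End.mul_apply] using (hBP (P⁻¹.val v) (P⁻¹.val w)).symm

variable {ρ : Representation k N V} {B : ρ.Equiv ρ.dual}

/-- The tautological lift of `N` into `conjIsometries ρ B`. -/
def toConjIsometries (B : ρ.Equiv ρ.dual) : N →* conjIsometries ρ B :=
  (N.subtype.prod ρ.toHomUnits).codRestrict _ fun n =>
    ⟨fun m => by
      have hnm : n * m = MulAut.conjNormal (n : G) m * n := Subtype.ext (by simp)
      exact (map_mul ρ n m).symm.trans ((congrArg ρ hnm).trans (map_mul ρ _ n)),
      dualEquiv_apply_apply B n⟩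

variable (ρ B) in
/-- The projection `(g, P) ↦ g`. -/
def conjIsometriesFst : conjIsometries ρ B →* G :=
  (MonoidHom.fst _ _).comp (conjIsometries ρ B).subtype

instance normal_range_toConjIsometries : (toConjIsometries B).range.Normal := by
  refine ⟨?_⟩
  rintro _ ⟨n, rfl⟩ ⟨⟨g, P⟩, hP, hBP⟩
  refine ⟨MulAut.conjNormal g n, Subtype.ext (Prod.ext (MulAut.conjNormal_apply g n) ?_)⟩
  exact eq_mul_inv_of_mul_eq (Units.ext (hP n).symm)

variable [IsAlgClosed k] [FiniteDimensional k V] [ρ.IsIrreducible]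

theorem exists_similitude_factor {g : G} (φ : ρ.Equiv (conjRep ρ g)) :
    ∃ c : k, c ≠ 0 ∧ ∀ v w, B (φ v) (φ w) = c * B v w := by
  let f : V →ₗ[k] Module.Dual k V := φ.toLinearMap.dualMap ∘ₗ B.toLinearMap ∘ₗ φ.toLinearMap
  have hf : IsIntertwiningMap ρ ρ.dual f := by
    refine isIntertwiningMap_dual_iff.2 fun n v w => ?_
    have hφ : ∀ u, φ (ρ n u) = ρ (MulAut.conjNormal g n) (φ u) := φ.isIntertwining _ _ n
    simpa [f, hφ] using dualEquiv_apply_apply B (MulAut.conjNormal g n) (φ v) (φ w)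
  obtain ⟨c, hc⟩ := exists_eq_smul_of_equiv B (f.intertwiningMap_of_isIntertwiningMap _ _ hf.1)
  have hc' : ∀ v w, B (φ v) (φ w) = c * B v w := fun v => DFunLike.congr_fun (hc v)
  obtain ⟨v, w, hvw⟩ := exists_dualEquiv_apply_ne_zero B
  refine ⟨c, fun hc0 => hvw ?_, hc'⟩
  simpa [hc0] using hc' (φ.symm v) (φ.symm w)

theorem exists_mem_conjIsometries {g : G} (φ : ρ.Equiv (conjRep ρ g)) :
    ∃ P, (g, P) ∈ conjIsometries ρ B := by
  obtain ⟨c, hc, hφ⟩ := exists_similitude_factor (B := B) φ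
  obtain ⟨d, hd⟩ := IsAlgClosed.exists_pow_nat_eq c⁻¹ two_pos
  have hd0 : d ≠ 0 := by
    rintro rfl
    simp [eq_comm, hc] at hd
  refine ⟨Units.mk0 d hd0 • LinearMap.GeneralLinearGroup.ofLinearEquiv φ.toLinearEquiv,
    fun n => ?_, fun v w => ?_⟩
  · ext v
    simpa using congrArg (d • ·) (φ.isIntertwining _ _ n v)
  · have hdc : d * (d * c) = 1 := by rw [← mul_assoc, ← sq, hd, inv_mul_cancel₀ hc]
    simp [hφ, ← mul_assoc, hdc]

theorem eq_one_or_eq_neg_one_of_one_mem_conjIsometries {P : (Module.End k V)ˣ}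
    (hP : ((1 : G), P) ∈ conjIsometries ρ B) : P = 1 ∨ P = -1 := by
  obtain ⟨hcomm, hform⟩ := hP
  let f : ρ.IntertwiningMap ρ := ⟨P.val, fun n => by
    simpa [← Module.End.mul_eq_comp] using hcomm n⟩
  obtain ⟨c, hc⟩ := exists_eq_smul_of_equiv (.refl ρ) f
  have hPc : ∀ v, P.val v = c • v := hc
  have hsq : c ^ 2 = 1 := by
    obtain ⟨v, w, hvw⟩ := exists_dualEquiv_apply_ne_zero B
    have hscale : c ^ 2 * B v w = 1 * B v w := by
      simpa [hPc, sq, mul_assoc] using hform v w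
    exact mul_right_cancel₀ hvw hscale
  refine (sq_eq_one_iff.1 hsq).imp ?_ ?_ <;> rintro rfl <;> ext v <;> simp [hPc]

theorem card_ker_conjIsometriesFst_dvd_two : Nat.card (conjIsometriesFst ρ B).ker ∣ 2 := by
  let snd : (conjIsometriesFst ρ B).ker →* (Module.End k V)ˣ :=
    (MonoidHom.snd _ _).comp ((conjIsometries ρ B).subtype.comp (Subgroup.subtype _))
  have hsnd : ∀ x, snd x ∈ Subgroup.zpowers (-1) := by
    rintro ⟨⟨⟨g, P⟩, hP⟩, rfl : g = 1⟩
    obtain rfl | rfl := eq_one_or_eq_neg_one_of_one_mem_conjIsometries hP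
    · exact one_mem _
    · exact Subgroup.mem_zpowers _
  have hinj : Function.Injective (snd.codRestrict (Subgroup.zpowers (-1)) hsnd) := fun x y h =>
    Subtype.ext (Subtype.ext (Prod.ext (x.2.trans y.2.symm) (congrArg Subtype.val h)))
  calc Nat.card (conjIsometriesFst ρ B).ker
      ∣ Nat.card (Subgroup.zpowers (-1 : (Module.End k V)ˣ)) :=
        Subgroup.card_dvd_of_injective _ hinj
    _ = orderOf (-1 : (Module.End k V)ˣ) := Nat.card_zpowers _
    _ ∣ 2 := orderOf_dvd_of_pow_eq_one neg_one_sq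

theorem exists_extension_of_odd_index (hodd : Odd N.index) (B : ρ.Equiv ρ.dual)
    (hconj : ∀ g, Nonempty (ρ.Equiv (conjRep ρ g))) :
    ∃ σ : Representation k G V, resRep σ N.subtype = ρ ∧ Nonempty (σ.Equiv σ.dual) := by
  have hsurj : Function.Surjective (conjIsometriesFst ρ B) := fun g => by
    obtain ⟨φ⟩ := hconj g
    obtain ⟨P, hP⟩ := exists_mem_conjIsometries (B := B) φ
    exact ⟨⟨(g, P), hP⟩, rfl⟩
  obtain ⟨τ, -, hτN⟩ := exists_section_extending_of_coprime hsurj (s := toConjIsometries B)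
    (fun n => rfl) <|
      (Nat.coprime_two_left.2 hodd).coprime_dvd_left card_ker_conjIsometriesFst_dvd_two
  let σ : Representation k G V := (Units.coeHom _).comp
    ((MonoidHom.snd _ _).comp ((conjIsometries ρ B).subtype.comp τ))
  have hσ : IsIntertwiningMap σ σ.dual B.toLinearMap :=
    isIntertwiningMap_dual_iff.2 fun g => (τ g).2.2
  refine ⟨σ, MonoidHom.ext fun n => ?_, ⟨.mk B.toLinearEquiv fun g => LinearMap.ext (hσ.1 g)⟩⟩
  exact congrArg (fun x => x.1.2.val) (hτN n)

end ConjIsometries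

section TwoExtensions

variable {k V W G : Type*} [Field k] [AddCommGroup V] [Module k V] [AddCommGroup W]
  [Module k W] [Group G] {N : Subgroup G} [N.Normal]
  {σ₁ : Representation k G V} {σ₂ : Representation k G W} [(resRep σ₁ N.subtype).IsIrreducible]

theorem exists_twist_factor [IsAlgClosed k] [FiniteDimensional k V]
    (φ : (resRep σ₁ N.subtype).Equiv (resRep σ₂ N.subtype)) (g : G) :
    ∃ c : k, ∀ v, σ₂ g (φ v) = c • φ (σ₁ g v) := by
  let f : V →ₗ[k] W := σ₂ g ∘ₗ φ.toLinearMap ∘ₗ σ₁ g⁻¹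
  have hf : IsIntertwiningMap (resRep σ₁ N.subtype) (resRep σ₂ N.subtype) f := by
    refine ⟨fun n v => ?_⟩
    let m := MulAut.conjNormal g⁻¹ n
    have h₁ : σ₁ g⁻¹ (σ₁ n v) = σ₁ m (σ₁ g⁻¹ v) := by
      simp [m, ← Module.End.mul_apply, ← map_mul]
    have h₂ : ∀ w, σ₂ g (σ₂ m w) = σ₂ n (σ₂ g w) := by
      simp [m, ← Module.End.mul_apply, ← map_mul, mul_assoc]
    calc σ₂ g (φ (σ₁ g⁻¹ (σ₁ n v))) = σ₂ g (φ (σ₁ m (σ₁ g⁻¹ v))) := by rw [h₁]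
      _ = σ₂ g (σ₂ m (φ (σ₁ g⁻¹ v))) := congrArg (σ₂ g) (φ.isIntertwining _ _ m _)
      _ = σ₂ n (σ₂ g (φ (σ₁ g⁻¹ v))) := h₂ _
  obtain ⟨c, hc⟩ := exists_eq_smul_of_equiv φ (f.intertwiningMap_of_isIntertwiningMap _ _ hf.1)
  refine ⟨c, fun v => ?_⟩
  have hgv : f (σ₁ g v) = c • φ (σ₁ g v) := hc _
  simpa [f] using hgv

theorem twist_factor_pow_index {c : k} {g : G}
    (φ : (resRep σ₁ N.subtype).Equiv (resRep σ₂ N.subtype))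
    (hc : ∀ v, σ₂ g (φ v) = c • φ (σ₁ g v)) : c ^ N.index = 1 := by
  have hpow : ∀ (m : ℕ) v, σ₂ (g ^ m) (φ v) = c ^ m • φ (σ₁ (g ^ m) v) := by
    intro m
    induction m with
    | zero => simp
    | succ m ih =>
      intro v
      rw [pow_succ, map_mul, map_mul, Module.End.mul_apply, Module.End.mul_apply, hc, map_smul, ih,
        smul_smul, pow_succ']
  have := nontrivial_of_isIrreducible (resRep σ₁ N.subtype)
  obtain ⟨v, hv⟩ := exists_ne (0 : V)
  let n : N := ⟨g ^ N.index, N.pow_index_mem g⟩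
  have hne : φ (σ₁ (g ^ N.index) v) ≠ 0 := by
    rwa [map_ne_zero_iff φ φ.injective, map_ne_zero_iff _ (σ₁.apply_bijective _).injective]
  exact smul_left_injective k hne <|
    (hpow N.index v).symm.trans <| (φ.isIntertwining _ _ n v).symm.trans (one_smul k _).symm

theorem character_pow_index_eq [IsAlgClosed k] [FiniteDimensional k V]
    (φ : (resRep σ₁ N.subtype).Equiv (resRep σ₂ N.subtype)) (g : G) :
    σ₁.character g ^ N.index = σ₂.character g ^ N.index := by
  obtain ⟨c, hc⟩ := exists_twist_factor φ g
  have hconj : σ₂ g = φ.toLinearEquiv.conj (c • σ₁ g) := by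
    ext w
    obtain ⟨v, rfl⟩ := φ.toLinearEquiv.surjective w
    rw [LinearEquiv.conj_apply_apply, LinearEquiv.symm_apply_apply]
    exact (hc v).trans (map_smul φ c _).symm
  have hchar : σ₂.character g = c * σ₁.character g := by
    rw [Representation.character, hconj, LinearMap.trace_conj', map_smul, smul_eq_mul,
      Representation.character]
  rw [hchar, mul_pow, twist_factor_pow_index φ hc, one_mul]

end TwoExtensions

section Characters

variable {G : Type*} [Group G] [Finite G]

theorem nonempty_equiv_of_character_eq {k V W : Type*} [Field k] [IsAlgClosed k] [CharZero k]
    [AddCommGroup V] [Module k V] [FiniteDimensional k V] [AddCommGroup W] [Module k W]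
    [FiniteDimensional k W] {ρ : Representation k G V} {σ : Representation k G W}
    [ρ.IsIrreducible] (h : ρ.character = σ.character) : Nonempty (ρ.Equiv σ) := by
  have := Fintype.ofFinite G
  have := invertibleOfNonzero (NeZero.ne (Nat.card G : k))
  have hrank : Module.finrank k (ρ.IntertwiningMap σ) = 1 := by
    rw [← IsIrreducible.finrank_intertwiningMap_self ρ]
    apply Nat.cast_injective (R := k)
    rw [← Representation.card_inv_mul_sum_char_mul_char_eq_finrank, ← h,
      Representation.card_inv_mul_sum_char_mul_char_eq_finrank]
  obtain ⟨f, hf⟩ := (Module.finrank_pos_iff_exists_ne_zero (R := k)).1 (hrank ▸ one_pos)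
  have hdim : Module.finrank k V = Module.finrank k W := by
    apply Nat.cast_injective (R := k)
    rw [← ρ.char_one, ← σ.char_one, h]
  have hinj : Function.Injective f := (IsIrreducible.injective_or_eq_zero f).resolve_right hf
  exact ⟨IntertwiningMap.ofBijective f ⟨hinj,
    (LinearMap.injective_iff_surjective_of_finrank_eq_finrank (f := f.toLinearMap) hdim).1 hinj⟩⟩

open scoped ComplexOrder in
theorem exists_posDef_conjTranspose_mul_eq_mul_inv {𝕜 n : Type*} [RCLike 𝕜] [Fintype n]
    [DecidableEq n] (A : G →* Matrix n n 𝕜) :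
    ∃ S : Matrix n n 𝕜, S.PosDef ∧ ∀ g, (A g).conjTranspose * S = S * A g⁻¹ := by
  have := Fintype.ofFinite G
  refine ⟨∑ x, (A x).conjTranspose * A x, ?_, fun g => ?_⟩
  · refine Matrix.posDef_sum Finset.univ_nonempty fun x _ => ?_
    exact .conjTranspose_mul_self _ (Matrix.mulVec_injective_of_isUnit ((Group.isUnit x).map A))
  · simp only [Finset.mul_sum, Finset.sum_mul]
    refine Fintype.sum_equiv (Equiv.mulRight g) _ _ fun x => ?_
    rw [Equiv.coe_mulRight, map_mul, Matrix.conjTranspose_mul, Matrix.mul_assoc, Matrix.mul_assoc,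
      Matrix.mul_assoc, ← map_mul A, mul_inv_cancel, map_one, Matrix.mul_one]

open scoped ComplexOrder in
theorem character_inv_eq_star {𝕜 V : Type*} [RCLike 𝕜] [AddCommGroup V] [Module 𝕜 V]
    [FiniteDimensional 𝕜 V] (ρ : Representation 𝕜 G V) (g : G) :
    ρ.character g⁻¹ = star (ρ.character g) := by
  classical
  let b := Module.finBasis 𝕜 V
  let A : G →* Matrix _ _ 𝕜 := (LinearMap.toMatrixAlgEquiv b).toMulEquiv.toMonoidHom.comp ρ
  have htrace : ∀ g, ρ.character g = (A g).trace := fun g =>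
    LinearMap.trace_eq_matrix_trace 𝕜 b (ρ g)
  obtain ⟨S, hS, hAS⟩ := exists_posDef_conjTranspose_mul_eq_mul_inv A
  obtain ⟨u, rfl⟩ := hS.isUnit
  calc ρ.character g⁻¹ = (A g⁻¹).trace := htrace _
    _ = (u⁻¹.val * ((A g).conjTranspose * u.val)).trace := by
      rw [hAS, ← Matrix.mul_assoc, u.inv_mul, Matrix.one_mul]
    _ = (A g).conjTranspose.trace := by
      rw [Matrix.trace_mul_comm, Matrix.mul_assoc, u.mul_inv, Matrix.mul_one]
    _ = star (ρ.character g) := by rw [Matrix.trace_conjTranspose, htrace]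

variable {V : Type*} [AddCommGroup V] [Module ℂ V] [FiniteDimensional ℂ V]

theorem nonempty_equiv_dual_iff {ρ : Representation ℂ G V} [ρ.IsIrreducible] :
    Nonempty (ρ.Equiv ρ.dual) ↔ ∀ g, (ρ.character g).im = 0 := by
  have hdual : ρ.dual.character = star ρ.character :=
    funext fun g => (ρ.char_dual g).trans (character_inv_eq_star ρ g)
  refine ⟨fun ⟨B⟩ g => ?_, fun h => nonempty_equiv_of_character_eq ?_⟩
  · rw [← Complex.conj_eq_iff_im]
    exact (congrFun ((Representation.char_iso B).trans hdual) g).symm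
  · rw [hdual]
    exact funext fun g => (Complex.conj_eq_iff_im.2 (h g)).symm

end Characters

section RealExtensions

variable {G V W : Type*} [Group G] [Finite G] {N : Subgroup G} [N.Normal] [AddCommGroup V]
  [Module ℂ V] [FiniteDimensional ℂ V] [AddCommGroup W] [Module ℂ W] [FiniteDimensional ℂ W]

theorem exists_real_extension (hodd : Odd N.index) (ρ : Representation ℂ N V) [ρ.IsIrreducible]
    (hreal : ∀ n, (ρ.character n).im = 0)
    (hinv : ∀ g n, ρ.character (MulAut.conjNormal g n) = ρ.character n) :
    ∃ σ : Representation ℂ G V, resRep σ N.subtype = ρ ∧ ∀ g, (σ.character g).im = 0 := by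
  obtain ⟨B⟩ := nonempty_equiv_dual_iff.2 hreal
  have hconj : ∀ g, Nonempty (ρ.Equiv (conjRep ρ g)) := fun g =>
    nonempty_equiv_of_character_eq (funext fun n => (hinv g n).symm)
  obtain ⟨σ, rfl, hσ⟩ := exists_extension_of_odd_index hodd B hconj
  have := isIrreducible_of_resRep N.subtype (ρ := σ)
  exact ⟨σ, rfl, nonempty_equiv_dual_iff.1 hσ⟩

theorem character_eq_of_real (hodd : Odd N.index) {σ₁ : Representation ℂ G V}
    {σ₂ : Representation ℂ G W} [(resRep σ₁ N.subtype).IsIrreducible]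
    (h₁ : ∀ g, (σ₁.character g).im = 0) (h₂ : ∀ g, (σ₂.character g).im = 0)
    (h : ∀ n : N, σ₁.character n = σ₂.character n) : σ₁.character = σ₂.character := by
  obtain ⟨φ⟩ : Nonempty ((resRep σ₁ N.subtype).Equiv (resRep σ₂ N.subtype)) :=
    nonempty_equiv_of_character_eq (funext h)
  funext g
  have hpow := character_pow_index_eq φ g
  rw [← Complex.conj_eq_iff_re.1 (Complex.conj_eq_iff_im.2 (h₁ g)),
    ← Complex.conj_eq_iff_re.1 (Complex.conj_eq_iff_im.2 (h₂ g))] at hpow ⊢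
  norm_cast at hpow ⊢
  exact hodd.strictMono_pow.injective hpow

end RealExtensions

section Simple

universe u v

variable {k : Type u} {G : Type v} [Field k] [Monoid G] (V : FDRep k G)

theorem isIrreducible_of_simple [Simple V] : IsIrreducible (V := V) V.ρ where
  exists_pair_ne := by
    refine ⟨⊥, ⊤, fun hbot => id_nonzero V ?_⟩
    have hV : (⊥ : Submodule k V) = ⊤ := congrArg Subrepresentation.toSubmodule hbot
    ext v
    exact (Submodule.mem_bot k).1 (hV ▸ Submodule.mem_top)
  eq_bot_or_eq_top S := by
    let i : FDRep.of S.toRepresentation ⟶ V :=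
      ⟨FGModuleCat.ofHom S.toSubmodule.subtype, fun g => by ext; rfl⟩
    have : Mono i := ConcreteCategory.mono_of_injective _ Subtype.val_injective
    by_cases hi : i = 0
    · left
      apply Subrepresentation.toSubmodule_injective
      refine (Submodule.eq_bot_iff _).2 fun v hv => ?_
      exact congrArg (fun f => f.hom.hom.hom ⟨v, hv⟩) hi
    · right
      have := isIso_of_mono_of_nonzero hi
      have hsurj : Function.Surjective i := (ConcreteCategory.bijective_of_isIso i).2
      apply Subrepresentation.toSubmodule_injective
      refine Submodule.eq_top_iff'.2 fun v => ?_
      obtain ⟨w, rfl⟩ := hsurj v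
      exact w.2

theorem simple_of_isIrreducible [h : IsIrreducible (V := V) V.ρ] :
    Simple V where
  mono_isIso_iff_nonzero {U} f _ := by
    let F := (forget₂ (FDRep k G) (Rep k G)).map f
    have hV : IsIrreducible ((forget₂ (FDRep k G) (Rep k G)).obj V).ρ := h
    have hinj : Function.Injective F.hom := (Rep.mono_iff_injective F).1 inferInstance
    constructor
    · rintro hf rfl
      have := nontrivial_of_isIrreducible (V := V) V.ρ
      obtain ⟨v, hv⟩ := exists_ne (0 : V)
      have hid : 𝟙 V = 0 := (Limits.isIsoZeroEquiv U V hf).2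
      exact hv (congrArg (fun f => f.hom.hom.hom v) hid)
    · intro hf
      have hsurj : Function.Surjective F.hom := by
        refine (IsIrreducible.surjective_or_eq_zero F.hom).resolve_right fun h0 => hf ?_
        apply (forget₂ (FDRep k G) (Rep k G)).map_injective
        ext v
        exact DFunLike.congr_fun h0 v
      have : IsIso F := (Rep.mkIso (F.hom.ofBijective ⟨hinj, hsurj⟩)).isIso_hom
      exact isIso_of_reflects_iso f (forget₂ (FDRep k G) (Rep k G))

end Simple

section Inertia

variable {H : Type} [Group H] {M T : Subgroup H} {χ : H → ℂ}

theorem le_inertiaGroup (hsupp : ∀ x, x ∉ M → χ x = 0) (hχ : IsIrredCharOn M χ) :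
    M ≤ inertiaGroup χ := by
  obtain ⟨V, -, hV⟩ := hχ
  intro m hm x
  by_cases hx : x ∈ M
  · have hconj := V.char_conj ⟨x, hx⟩ ⟨m⁻¹, inv_mem hm⟩
    rw [← hV, ← hV] at hconj
    simpa using hconj
  · have hx' : m⁻¹ * x * m ∉ M := by
      rwa [Subgroup.mul_mem_cancel_right _ hm, Subgroup.mul_mem_cancel_left _ (inv_mem hm)]
    rw [hsupp x hx, hsupp _ hx']

theorem exists_real_extension_of_le_inertiaGroup [Finite H] [M.Normal] (hodd : Odd (M.relIndex T))
    (hMT : M ≤ T) (hT : T ≤ inertiaGroup χ) (hχ : IsIrredCharOn M χ) (hreal : ∀ x, (χ x).im = 0) :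
    ∃ U : FDRep ℂ T, IsIrreducible (resRep (V := U) U.ρ (M.subgroupOf T).subtype) ∧
      (∀ t, (U.character t).im = 0) ∧ ∀ n : M.subgroupOf T, U.character n = χ n := by
  obtain ⟨V, hV, hVχ⟩ := hχ
  let ι : M.subgroupOf T ≃* M := Subgroup.subgroupOfEquivOfLe hMT
  let ρ : Representation ℂ (M.subgroupOf T) V := resRep V.ρ ι.toMonoidHom
  have hρχ : ∀ n, ρ.character n = χ n := fun n => (hVχ (ι n)).symm
  have hρ : ρ.IsIrreducible := by
    have hres : resRep ρ ι.symm.toMonoidHom = V.ρ :=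
      MonoidHom.ext fun m => congrArg V.ρ (ι.apply_symm_apply m)
    have : (resRep ρ ι.symm.toMonoidHom).IsIrreducible := hres ▸ isIrreducible_of_simple V
    exact isIrreducible_of_resRep ι.symm.toMonoidHom
  obtain ⟨σ, hσ, hσreal⟩ := exists_real_extension hodd ρ (fun n => hρχ n ▸ hreal _) fun g n => by
    simpa [hρχ] using inv_mem (hT g.2) (n : T)
  refine ⟨FDRep.of σ, hσ ▸ hρ, hσreal, fun n => (hρχ n).symm ▸ ?_⟩
  exact congrArg (fun τ => τ.character n) hσ

end Inertia

/-- Navarro--Tiep: if `M ⊴ H` has odd index and `χ ∈ Irr(M)` is real-valued, then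
`χ` has a unique real-valued extension to its inertia group `H_χ`. -/
theorem stmt_11 {H : Type} [Group H] [Fintype H] (M : Subgroup H) [M.Normal]
    (hodd : Odd M.index) (χ : H → ℂ)
    (hsupp : ∀ x : H, x ∉ M → χ x = 0)
    (hirr : IsIrredCharOn M χ)
    (hreal : ∀ x : H, (χ x).im = 0) :
    ∃! ψ : H → ℂ,
      IsIrredCharOn (inertiaGroup χ) ψ ∧
      (∀ x : H, x ∉ inertiaGroup χ → ψ x = 0) ∧
      (∀ x : H, (ψ x).im = 0) ∧
      (∀ x : H, x ∈ M → ψ x = χ x) := by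
  have hMT := le_inertiaGroup hsupp hirr
  have hindex := hodd.of_dvd_nat (M.relIndex_dvd_index_of_normal (inertiaGroup χ))
  obtain ⟨U, hUirr, hUreal, hUχ⟩ :=
    exists_real_extension_of_le_inertiaGroup hindex hMT le_rfl hirr hreal
  have := isIrreducible_of_resRep (ρ := U.ρ) (M.subgroupOf (inertiaGroup χ)).subtype
  let ψ : H → ℂ := Function.extend Subtype.val U.character 0
  have hψ : ∀ t : inertiaGroup χ, ψ t = U.character t := Subtype.val_injective.extend_apply _ _
  have hψ₀ : ∀ x ∉ inertiaGroup χ, ψ x = 0 := fun x hx => Function.extend_apply' _ _ _ (by simpa)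
  refine ⟨ψ, ⟨⟨U, simple_of_isIrreducible U, hψ⟩, hψ₀, fun x => ?_, fun x hx =>
    (hψ ⟨x, hMT hx⟩).trans (hUχ ⟨⟨x, hMT hx⟩, hx⟩)⟩, ?_⟩
  · by_cases hx : x ∈ inertiaGroup χ
    · exact hψ ⟨x, hx⟩ ▸ hUreal _
    · simp [hψ₀ x hx]
  · rintro ψ' ⟨⟨W, -, hW⟩, hψ'₀, hψ'real, hψ'χ⟩
    have hUW := character_eq_of_real (σ₂ := W.ρ) hindex hUreal
      (fun t => (congrArg Complex.im (hW t)).symm.trans (hψ'real t)) fun n =>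
        (hUχ n).trans (hψ'χ n n.2 ▸ hW n)
    funext x
    by_cases hx : x ∈ inertiaGroup χ
    · exact (hW ⟨x, hx⟩).trans ((congrFun hUW.symm _).trans (hψ ⟨x, hx⟩).symm)
    · rw [hψ'₀ x hx, hψ₀ x hx]
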